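/- For every real number x with −1 ≤ x ≤ 1, the series ∑_{n=1}^∞ (n · x^{2n+3}/(4^n (2n−1)^2 (2n+1)(2n+3))) · binom(2n,n) equals ((8x^4 − 8x^2 + 3) arcsin x + √(1−x^2) · (6x^3 − 3x))/128. -/

import Mathlib

open Real

/-!
Put `c m = binom(2m, m) / 4 ^ m`, so that `∑ c m * x ^ (2m) = 1 / √(1 - x ^ 2)` on `(-1, 1)`.
Since `(m + 1) * c (m + 1) = (2m + 1) / 2 * c m`, the term of index `n = m + 1` of the series is
`1 / 2 * c m * x ^ (2m + 5) / ((2m + 1) (2m + 3) (2m + 5))`. It arises from `c m * x ^ (2m)` by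
integrating from `0`, multiplying by `x`, integrating, multiplying by `x`, integrating, and halving.
Applied to `1 / √(1 - x ^ 2)`, these operations give `arcsin x`, then
`((2 x ^ 2 - 1) arcsin x + x √(1 - x ^ 2)) / 4`, and finally the claimed closed form; each
integration is justified by `eq_tsum_of_hasDerivAt`. The endpoints `x = ± 1` follow by continuity,
as the series converges uniformly on `[-1, 1]`.
-/

/-- The coefficient `binom(2m, m) / 4 ^ m` of `y ^ m` in the expansion of `1 / √(1 - y)`. -/
noncomputable def centralCoeff (m : ℕ) : ℝ := (Nat.centralBinom m : ℝ) / 4 ^ m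

lemma centralCoeff_nonneg (m : ℕ) : 0 ≤ centralCoeff m := by
  unfold centralCoeff; positivity

lemma centralCoeff_le_one (m : ℕ) : centralCoeff m ≤ 1 := by
  unfold centralCoeff
  rw [div_le_one (by positivity)]
  exact_mod_cast Nat.centralBinom_le_four_pow m

lemma centralCoeff_succ (m : ℕ) :
    ((m : ℝ) + 1) * centralCoeff (m + 1) = (m + 1 / 2) * centralCoeff m := by
  have h : ((m : ℝ) + 1) * Nat.centralBinom (m + 1) = 2 * (2 * m + 1) * Nat.centralBinom m := by
    exact_mod_cast Nat.succ_mul_centralBinom_succ m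
  unfold centralCoeff
  rw [← mul_div_assoc, h, pow_succ]
  field_simp
  ring

lemma ringChoose_eq_centralCoeff (m : ℕ) :
    Ring.choose ((1 / 2 : ℝ) + m - 1) m = centralCoeff m := by
  have h (n : ℕ) : (n.factorial : ℝ) * Ring.multichoose (1 / 2 : ℝ) n
      = (ascPochhammer ℝ n).eval (1 / 2) := by
    rw [← nsmul_eq_mul, Ring.factorial_nsmul_multichoose_eq_ascPochhammer,
      Polynomial.ascPochhammer_smeval_eq_eval]
  rw [← Ring.multichoose_eq]
  have hm : (m.factorial : ℝ) ≠ 0 := by positivity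
  apply mul_left_cancel₀ hm
  rw [h]
  clear hm
  induction m with
  | zero => simp [centralCoeff]
  | succ m ih =>
    rw [ascPochhammer_succ_eval, ih, Nat.factorial_succ]
    push_cast
    linear_combination (-(m.factorial : ℝ)) * centralCoeff_succ m

lemma one_div_sqrt_eq_tsum {x : ℝ} (hx : x ∈ Set.Ioo (-1 : ℝ) 1) :
    1 / √(1 - x ^ 2) = ∑' m : ℕ, centralCoeff m * x ^ (2 * m) := by
  have hx2 : x ^ 2 < 1 := by nlinarith [hx.1, hx.2]
  have h := Real.one_div_one_sub_rpow_hasFPowerSeriesOnBall_zero (1 / 2)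
  have h2 := h.hasSum (y := x ^ 2) (by
    have hx' : ‖x ^ 2‖₊ < 1 := by
      rw [← NNReal.coe_lt_coe, coe_nnnorm, Real.norm_of_nonneg (sq_nonneg x)]
      exact hx2
    simpa only [Metric.mem_eball, edist_zero_right, enorm_eq_nnnorm, ENNReal.coe_lt_one_iff]
      using hx')
  simp only [FormalMultilinearSeries.ofScalars_apply_eq, zero_add, smul_eq_mul,
    ringChoose_eq_centralCoeff, ← pow_mul] at h2
  rw [h2.tsum_eq, Real.sqrt_eq_rpow]

/-- Term-by-term integration from `0` on `(-1, 1)` of a power series with bounded coefficients. -/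
lemma eq_tsum_of_hasDerivAt {u : ℕ → ℝ} (hu : ∀ m, |u m| ≤ 1) (k : ℕ) {H h : ℝ → ℝ}
    (hH : ∀ x ∈ Set.Ioo (-1 : ℝ) 1, HasDerivAt H (h x) x) (hH0 : H 0 = 0)
    (hh : ∀ x ∈ Set.Ioo (-1 : ℝ) 1, h x = ∑' m : ℕ, u m * x ^ (2 * m + k))
    {x : ℝ} (hx : x ∈ Set.Ioo (-1 : ℝ) 1) :
    H x = ∑' m : ℕ, u m / (2 * m + k + 1) * x ^ (2 * m + k + 1) := by
  have hG : ∀ y ∈ Set.Ioo (-1 : ℝ) 1, HasDerivAt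
      (fun z : ℝ => ∑' m : ℕ, u m / (2 * m + k + 1) * z ^ (2 * m + k + 1)) (h y) y := by
    intro y hy
    rw [hh y hy]
    -- The differentiated series is only locally dominated: work on `(-r, r)` with `|y| < r < 1`.
    obtain ⟨r, hyr, hr1⟩ := exists_between (abs_lt.2 ⟨hy.1, hy.2⟩)
    have hr0 : 0 < r := (abs_nonneg y).trans_lt hyr
    have hsum : Summable fun m : ℕ => (r ^ 2) ^ m :=
      summable_geometric_of_lt_one (by positivity) (by nlinarith)
    refine hasDerivAt_tsum_of_isPreconnected (t := Set.Ioo (-r) r) (y₀ := 0) hsum isOpen_Ioo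
      isPreconnected_Ioo
      (g := fun (m : ℕ) (z : ℝ) => u m / (2 * m + k + 1) * z ^ (2 * m + k + 1))
      (g' := fun (m : ℕ) (z : ℝ) => u m * z ^ (2 * m + k)) ?_ ?_ ?_ ?_ (abs_lt.1 hyr)
    · intro m z _
      have := (hasDerivAt_pow (2 * m + k + 1) z).const_mul (u m / (2 * m + k + 1))
      refine this.congr_deriv ?_
      have h0 : (2 * (m : ℝ) + k + 1) ≠ 0 := by positivity
      rw [Nat.add_sub_cancel]
      push_cast
      field_simp
    · intro m z hz
      have hz' : |z| ≤ r := (abs_lt.2 hz).le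
      rw [norm_mul, norm_pow, Real.norm_eq_abs, Real.norm_eq_abs, ← pow_mul]
      calc |u m| * |z| ^ (2 * m + k) ≤ 1 * r ^ (2 * m + k) := by
            gcongr
            exact hu m
        _ = r ^ (2 * m + k) := one_mul _
        _ ≤ r ^ (2 * m) := pow_le_pow_of_le_one hr0.le hr1.le (by omega)
    · exact ⟨by linarith, hr0⟩
    · simp
  refine IsOpen.eqOn_of_deriv_eq (𝕜 := ℝ) (x := 0) isOpen_Ioo isPreconnected_Ioo
    (fun y hy => (hH y hy).differentiableAt.differentiableWithinAt)
    (fun y hy => (hG y hy).differentiableAt.differentiableWithinAt)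
    (fun y hy => ?_) (by norm_num) (by simp [hH0]) hx
  rw [(hH y hy).deriv, (hG y hy).deriv]

lemma hasDerivAt_sqrt_one_sub_sq {x : ℝ} (hx : x ∈ Set.Ioo (-1 : ℝ) 1) :
    HasDerivAt (fun z : ℝ => √(1 - z ^ 2)) (-x / √(1 - x ^ 2)) x := by
  have hx2 : 0 < 1 - x ^ 2 := by nlinarith [hx.1, hx.2]
  have h := ((hasDerivAt_pow 2 x).const_sub 1).sqrt hx2.ne'
  refine h.congr_deriv ?_
  field_simp
  norm_num

lemma abs_div_le_one {a b : ℝ} (ha : |a| ≤ 1) (hb : 1 ≤ b) : |a / b| ≤ 1 := by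
  rw [abs_div, abs_of_pos (by linarith : 0 < b)]
  exact div_le_one_of_le₀ (ha.trans hb) (by linarith)

lemma arcsin_eq_tsum {x : ℝ} (hx : x ∈ Set.Ioo (-1 : ℝ) 1) :
    arcsin x = ∑' m : ℕ, centralCoeff m / (2 * m + 1) * x ^ (2 * m + 1) := by
  have h := eq_tsum_of_hasDerivAt (u := centralCoeff) (H := arcsin)
    (h := fun x => 1 / √(1 - x ^ 2))
    (fun m => by rw [abs_of_nonneg (centralCoeff_nonneg m)]; exact centralCoeff_le_one m) 0
    (fun y hy => hasDerivAt_arcsin hy.1.ne' hy.2.ne) arcsin_zero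
    (fun y hy => one_div_sqrt_eq_tsum hy) hx
  simpa using h

lemma second_integral_eq_tsum {x : ℝ} (hx : x ∈ Set.Ioo (-1 : ℝ) 1) :
    ((2 * x ^ 2 - 1) * arcsin x + x * √(1 - x ^ 2)) / 4 =
      ∑' m : ℕ, centralCoeff m / (2 * m + 1) / (2 * m + 3) * x ^ (2 * m + 3) := by
  have h := eq_tsum_of_hasDerivAt (u := fun m => centralCoeff m / (2 * m + 1))
    (H := fun x => ((2 * x ^ 2 - 1) * arcsin x + x * √(1 - x ^ 2)) / 4)
    (h := fun x => x * arcsin x)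
    (fun m => abs_div_le_one
      (by rw [abs_of_nonneg (centralCoeff_nonneg m)]; exact centralCoeff_le_one m)
      (by linarith [m.cast_nonneg (α := ℝ)])) 2
    (fun y hy => ?_) (by simp) (fun y hy => ?_) hx
  · rw [h]
    refine tsum_congr fun m => ?_
    push_cast
    ring
  · have hy2 : 0 < 1 - y ^ 2 := by nlinarith [hy.1, hy.2]
    have hs : 0 < √(1 - y ^ 2) := Real.sqrt_pos.2 hy2
    have hsq : √(1 - y ^ 2) ^ 2 = 1 - y ^ 2 := Real.sq_sqrt hy2.le
    have := ((((hasDerivAt_pow 2 y).const_mul 2).sub_const 1).mul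
      (hasDerivAt_arcsin hy.1.ne' hy.2.ne)).add
      ((hasDerivAt_id y).mul (hasDerivAt_sqrt_one_sub_sq hy))
    refine (this.div_const 4).congr_deriv ?_
    simp only [id]
    norm_num
    field_simp
    linear_combination hsq
  · rw [arcsin_eq_tsum hy, ← tsum_mul_left]
    refine tsum_congr fun m => ?_
    ring

lemma third_integral_eq_tsum {x : ℝ} (hx : x ∈ Set.Ioo (-1 : ℝ) 1) :
    ((8 * x ^ 4 - 8 * x ^ 2 + 3) * arcsin x + √(1 - x ^ 2) * (6 * x ^ 3 - 3 * x)) / 64 =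
      ∑' m : ℕ, centralCoeff m / (2 * m + 1) / (2 * m + 3) / (2 * m + 5) * x ^ (2 * m + 5) := by
  have h := eq_tsum_of_hasDerivAt (u := fun m => centralCoeff m / (2 * m + 1) / (2 * m + 3))
    (H := fun x => ((8 * x ^ 4 - 8 * x ^ 2 + 3) * arcsin x
      + √(1 - x ^ 2) * (6 * x ^ 3 - 3 * x)) / 64)
    (h := fun x => x * (((2 * x ^ 2 - 1) * arcsin x + x * √(1 - x ^ 2)) / 4))
    (fun m => abs_div_le_one (abs_div_le_one
      (by rw [abs_of_nonneg (centralCoeff_nonneg m)]; exact centralCoeff_le_one m)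
      (by linarith [m.cast_nonneg (α := ℝ)])) (by linarith [m.cast_nonneg (α := ℝ)])) 4
    (fun y hy => ?_) (by simp) (fun y hy => ?_) hx
  · rw [h]
    refine tsum_congr fun m => ?_
    push_cast
    ring
  · have hy2 : 0 < 1 - y ^ 2 := by nlinarith [hy.1, hy.2]
    have hs : 0 < √(1 - y ^ 2) := Real.sqrt_pos.2 hy2
    have hsq : √(1 - y ^ 2) ^ 2 = 1 - y ^ 2 := Real.sq_sqrt hy2.le
    have := (((((hasDerivAt_pow 4 y).const_mul 8).sub
      ((hasDerivAt_pow 2 y).const_mul 8)).add_const 3).mul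
      (hasDerivAt_arcsin hy.1.ne' hy.2.ne)).add
      ((hasDerivAt_sqrt_one_sub_sq hy).mul
        (((hasDerivAt_pow 3 y).const_mul 6).sub ((hasDerivAt_id y).const_mul 3)))
    refine (this.div_const 64).congr_deriv ?_
    simp only [id, Pi.sub_apply]
    norm_num
    field_simp
    linear_combination (8 * y ^ 2 - 12) * hsq
  · rw [second_integral_eq_tsum hy, ← tsum_mul_left]
    refine tsum_congr fun m => ?_
    ring

lemma term_eq (x : ℝ) (n : ℕ) :
    (((n : ℝ) + 1) * x ^ (2 * (n + 1) + 3) /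
          (4 ^ (n + 1) * (2 * ((n : ℝ) + 1) - 1) ^ 2 * (2 * ((n : ℝ) + 1) + 1) *
            (2 * ((n : ℝ) + 1) + 3))) *
        (Nat.choose (2 * (n + 1)) (n + 1) : ℝ)
      = 1 / 2 *
        (centralCoeff n / (2 * n + 1) / (2 * n + 3) / (2 * n + 5) * x ^ (2 * n + 5)) := by
  have h := centralCoeff_succ n
  rw [← Nat.centralBinom_eq_two_mul_choose]
  have hc : (Nat.centralBinom (n + 1) : ℝ) = 4 ^ (n + 1) * centralCoeff (n + 1) := by
    unfold centralCoeff; field_simp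
  rw [hc, show 2 * ((n : ℝ) + 1) - 1 = 2 * n + 1 by ring,
    show 2 * ((n : ℝ) + 1) + 1 = 2 * n + 3 by ring,
    show 2 * ((n : ℝ) + 1) + 3 = 2 * n + 5 by ring, show 2 * (n + 1) + 3 = 2 * n + 5 by ring]
  have h1 : (2 * (n : ℝ) + 1) ≠ 0 := by positivity
  have h3 : (2 * (n : ℝ) + 3) ≠ 0 := by positivity
  have h5 : (2 * (n : ℝ) + 5) ≠ 0 := by positivity
  field_simp
  linear_combination 2 * x ^ (2 * n + 5) * h

theorem stmt_15 (x : ℝ) (hx1 : -1 ≤ x) (hx2 : x ≤ 1) :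
    ∑' n : ℕ,
        (((n : ℝ) + 1) * x ^ (2 * (n + 1) + 3) /
          (4 ^ (n + 1) * (2 * ((n : ℝ) + 1) - 1) ^ 2 * (2 * ((n : ℝ) + 1) + 1) *
            (2 * ((n : ℝ) + 1) + 3))) *
        (Nat.choose (2 * (n + 1)) (n + 1) : ℝ)
      = ((8 * x ^ 4 - 8 * x ^ 2 + 3) * Real.arcsin x +
          Real.sqrt (1 - x ^ 2) * (6 * x ^ 3 - 3 * x)) / 128 := by
  simp_rw [term_eq]
  rw [tsum_mul_left]
  suffices h : Set.EqOn
      (fun x : ℝ => ((8 * x ^ 4 - 8 * x ^ 2 + 3) * arcsin x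
        + √(1 - x ^ 2) * (6 * x ^ 3 - 3 * x)) / 64)
      (fun x : ℝ => ∑' m : ℕ,
        centralCoeff m / (2 * m + 1) / (2 * m + 3) / (2 * m + 5) * x ^ (2 * m + 5))
      (Set.Icc (-1) 1) by
    have := h ⟨hx1, hx2⟩
    simp only at this
    rw [← this]
    ring
  refine Set.EqOn.of_subset_closure (s := Set.Ioo (-1) 1)
    (fun y hy => third_integral_eq_tsum hy) ?_ ?_ Set.Ioo_subset_Icc_self
    (closure_Ioo (by norm_num)).ge
  · have := continuous_arcsin
    exact Continuous.continuousOn (by fun_prop)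
  · have hsum : Summable fun m : ℕ => 1 / ((m + 1 : ℕ) : ℝ) ^ 2 :=
      (summable_nat_add_iff 1).2 (Real.summable_one_div_nat_pow.2 one_lt_two)
    refine continuousOn_tsum (fun m => by fun_prop) hsum fun m y hy => ?_
    have hc0 := centralCoeff_nonneg m
    have hm : (0 : ℝ) ≤ m := m.cast_nonneg
    rw [norm_mul, norm_pow, Real.norm_eq_abs, Real.norm_eq_abs, abs_of_nonneg (by positivity),
      div_div, div_div]
    calc _ ≤ 1 / ((2 * (m : ℝ) + 1) * ((2 * m + 3) * (2 * m + 5))) * 1 := by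
          gcongr
          · exact centralCoeff_le_one m
          · exact pow_le_one₀ (abs_nonneg y) (abs_le.2 hy)
      _ ≤ 1 / ((m + 1 : ℕ) : ℝ) ^ 2 := by
          rw [mul_one]
          push_cast
          gcongr
          nlinarith [mul_nonneg hm hm, mul_nonneg hm (mul_nonneg hm hm)]
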